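/- Let M be a nonempty compact Lipschitz domain in ℝ². Then: (a) each connected component of ∂M is a Jordan curve, i.e. the image of a continuous map γ : [a,b] → ℝ² with γ(a) = γ(b) that is injective on [a,b); (b) if γ : [a,b] → ℝ² is such a Jordan curve parametrizing a connected component of ∂M, then there is a partition a = t₀ < t₁ < ⋯ < t_N = b such that the image of the restriction of γ to [t_i, t_{i+1}] is a Lipschitz graph for every i = 0, …, N−1. -/

import Mathlib

open Set
open scoped RealInnerProductSpace

/-- `M` is an `L`-Lipschitz graph in the direction of a unit vector `v`. -/
def IsLipschitzGraphInDir (L : ℝ) (v : EuclideanSpace ℝ (Fin 2))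
    (M : Set (EuclideanSpace ℝ (Fin 2))) : Prop :=
  ∃ (K : Set (EuclideanSpace ℝ (Fin 2))) (f : EuclideanSpace ℝ (Fin 2) → ℝ),
    IsClosed K ∧ Convex ℝ K ∧ (∀ t ∈ K, ⟪t, v⟫ = 0) ∧
    (∀ s ∈ K, ∀ t ∈ K, |f s - f t| ≤ L * ‖s - t‖) ∧
    M = (fun t => t + f t • v) '' K

/-- `M` is a Lipschitz graph: an `L`-Lipschitz graph in direction `v` for some `L > 0` and
some unit vector `v`. -/
def IsLipschitzGraph (M : Set (EuclideanSpace ℝ (Fin 2))) : Prop :=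
  ∃ L : ℝ, 0 < L ∧ ∃ v : EuclideanSpace ℝ (Fin 2), ‖v‖ = 1 ∧ IsLipschitzGraphInDir L v M

/-- `A ⊆ ℝ²` is a Lipschitz domain: it is nonempty and near every boundary point, after a
rigid motion, it coincides with the subgraph of a Lipschitz function. -/
def IsLipschitzDomain (A : Set (EuclideanSpace ℝ (Fin 2))) : Prop :=
  A.Nonempty ∧ ∀ x ∈ frontier A,
    ∃ (g : EuclideanSpace ℝ (Fin 2) ≃ᵢ EuclideanSpace ℝ (Fin 2)) (r : ℝ) (φ : ℝ → ℝ) (L : ℝ),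
      0 < r ∧ 0 ≤ L ∧ (∀ s t : ℝ, |φ s - φ t| ≤ L * |s - t|) ∧
      (g '' A) ∩ Metric.ball (g x) r
        = {p : EuclideanSpace ℝ (Fin 2) | p 1 ≤ φ (p 0)} ∩ Metric.ball (g x) r

/-!
The frontier of a Lipschitz domain is locally a bi-Lipschitz copy of the real line, so it can be
parametrised locally by arc length. Two arclength parametrisations that meet at a point differ near
it by an isometry of `ℝ`. Hence, by compactness, local parametrisations extend step by step to a
parametrisation `γ : ℝ → ∂M`, whose range is relatively open and closed in `∂M` and is therefore a
whole component. By compactness `γ` is not injective; two parameters with the same image differ by a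
period, because a reflection of `ℝ` fixing `γ` would make `γ` fold back at its centre. Restricting
`γ` to one least period gives the Jordan curve. Every path in `∂M` stays in a single local graph
near each parameter, so a Lebesgue number of this cover gives the partition.
-/

open Filter Topology
open scoped ENNReal NNReal

section Topology

theorem connectedComponentIn_eq_of_mem_nhdsWithin {X : Type*} [TopologicalSpace X] {F S : Set X}
    {y : X} (hSF : S ⊆ F) (hS : IsPreconnected S) (hopen : ∀ x ∈ S, S ∈ 𝓝[F] x)
    (hclosed : F ∩ closure S ⊆ S) (hy : y ∈ S) : connectedComponentIn F y = S := by
  have hCF := connectedComponentIn_subset F y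
  have hnhds : S ⊆ interior (S ∪ Fᶜ) := fun x hx => by
    rw [mem_interior_iff_mem_nhds]
    filter_upwards [mem_nhdsWithin_iff_eventually.1 (hopen x hx)] with v hv
    exact (em (v ∈ F)).imp hv id
  refine (hS.subset_connectedComponentIn hy hSF).antisymm' fun z hz => ?_
  by_contra hzS
  obtain ⟨w, hw, hwS, hwS'⟩ :=
    (isPreconnected_connectedComponentIn (F := F) (x := y))
      (interior (S ∪ Fᶜ)) (closure S)ᶜ isOpen_interior isClosed_closure.isOpen_compl
      (fun w hw => (em (w ∈ closure S)).imp (fun h => hnhds (hclosed ⟨hCF hw, h⟩)) id)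
      ⟨y, mem_connectedComponentIn (hSF hy), hnhds hy⟩
      ⟨z, hz, fun h => hzS (hclosed ⟨hCF hz, h⟩)⟩
  exact (interior_subset hwS).elim (fun h => hwS' (subset_closure h)) fun h => h (hCF hw)

theorem exists_partition_Icc_of_local {a b : ℝ} (hab : a < b) {P : Set ℝ → Prop}
    (hmono : ∀ ⦃S T⦄, S ⊆ T → P T → P S) (hlocal : ∀ x ∈ Icc a b, ∃ U ∈ 𝓝[Icc a b] x, P U) :
    ∃ (N : ℕ) (t : ℕ → ℝ), t 0 = a ∧ t N = b ∧ (∀ i < N, t i < t (i + 1)) ∧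
      ∀ i < N, P (Icc (t i) (t (i + 1))) := by
  choose U hU hPU using hlocal
  obtain ⟨V, hV, hVU⟩ := lebesgue_number_lemma_nhdsWithin' isCompact_Icc hU
  obtain ⟨δ, hδ, hδV⟩ := Metric.mem_uniformity_dist.1 hV
  obtain ⟨N, hN⟩ := exists_nat_gt ((b - a) / δ)
  have hNpos : (0 : ℝ) < N := (div_pos (sub_pos.2 hab) hδ).trans hN
  set η := (b - a) / N with hη
  have hηpos : 0 < η := div_pos (sub_pos.2 hab) hNpos
  have hNη : N * η = b - a := by rw [hη]; field_simp
  have hηδ : η < δ := (div_lt_comm₀ hδ hNpos).1 hN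
  refine ⟨N, fun i => a + i * η, by simp, by simp [hNη], fun i _ => ?_, fun i hi => ?_⟩
  · push_cast; linarith
  · have hi0 : 0 ≤ i * η := by positivity
    have hiN : ((i + 1 : ℕ) : ℝ) * η ≤ b - a := hNη ▸ by gcongr; exact hi
    push_cast at hiN ⊢
    have hsub : Icc (a + i * η) (a + (i + 1) * η) ⊆ Icc a b :=
      Icc_subset_Icc (by linarith) (by linarith)
    obtain ⟨⟨x, hx⟩, hxU⟩ := hVU _ (hsub (left_mem_Icc.2 (by linarith)))
    refine hmono (fun s hs => hxU ⟨hδV ?_, hsub hs⟩) (hPU x hx)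
    rw [Real.dist_eq, abs_sub_lt_iff]
    constructor <;> linarith [hs.1, hs.2]

theorem frontier_eventuallyEq {X : Type*} [TopologicalSpace X] {s t : Set X} {x : X}
    (h : s =ᶠ[𝓝 x] t) : frontier s =ᶠ[𝓝 x] frontier t := by
  refine Eventually.set_eq ?_
  filter_upwards [h.eventuallyEq_nhds] with y hy
  simp only [frontier_eq_closure_inter_closure, mem_inter_iff, mem_closure_iff_frequently]
  rw [frequently_congr hy.mem_iff, frequently_congr hy.compl.mem_iff]

end Topology

section RealLine

theorem real_isometry_eq_add_or_sub {f : ℝ → ℝ} (hf : Isometry f) :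
    (∀ u, f u = f 0 + u) ∨ ∀ u, f u = f 0 - u := by
  have hsq (u v : ℝ) : (f u - f v) ^ 2 = (u - v) ^ 2 := sq_eq_sq_iff_abs_eq_abs _ _ |>.2 <| by
    simpa only [Real.dist_eq] using hf.dist_eq u v
  have hmul (u : ℝ) : (f u - f 0) * (f 1 - f 0) = u := by
    linarith [hsq u 0, hsq 1 0, hsq u 1]
  refine (mul_self_eq_one_iff.1 (hmul 1)).imp (fun h u => ?_) fun h u => ?_
  all_goals
    have := hmul u
    rw [h] at this
    linarith

theorem real_isometry_eq_self_of_fixed {f : ℝ → ℝ} (hf : Isometry f) {u v : ℝ} (huv : u ≠ v)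
    (hu : f u = u) (hv : f v = v) (w : ℝ) : f w = w := by
  rcases real_isometry_eq_add_or_sub hf with h | h
  · linarith [h u, h w]
  · exact absurd (by linarith [h u, h v]) huv

theorem surjective_of_antilipschitz_of_monotone {f : ℝ → ℝ} {K : ℝ≥0} (hf : Continuous f)
    (hanti : AntilipschitzWith K f) (hmono : Monotone f) : Function.Surjective f := by
  have hdist (x : ℝ) : |x| ≤ (K + 1) * |f x - f 0| := by
    have := hanti.le_mul_dist x 0
    rw [Real.dist_eq, Real.dist_eq, sub_zero] at this
    nlinarith [abs_nonneg (f x - f 0)]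
  intro y
  set R := |y - f 0|
  have hK : (0 : ℝ) < K + 1 := by positivity
  have hX : 0 ≤ (K + 1) * R := by positivity
  refine mem_range_of_exists_le_of_exists_ge hf ⟨-((K + 1) * R), ?_⟩ ⟨(K + 1) * R, ?_⟩
  · have := hdist (-((K + 1) * R))
    rw [abs_neg, abs_of_nonneg hX, abs_of_nonpos (by linarith [hmono (neg_nonpos.2 hX)])] at this
    linarith [le_of_mul_le_mul_left this hK, neg_abs_le (y - f 0)]
  · have := hdist ((K + 1) * R)
    rw [abs_of_nonneg hX, abs_of_nonneg (by linarith [hmono hX])] at this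
    linarith [le_of_mul_le_mul_left this hK, le_abs_self (y - f 0)]

theorem exists_periodic_injOn_Ico {E : Type*} [TopologicalSpace E] [T2Space E] {γ : ℝ → E}
    (hγ : Continuous γ) (hloc : ∃ U ∈ 𝓝 (0 : ℝ), InjOn γ U)
    (htrans : ∀ s t, γ s = γ t → ∀ u, γ (s + u) = γ (t + u)) (hinj : ¬ Function.Injective γ) :
    ∃ T > 0, Function.Periodic γ T ∧ InjOn γ (Ico 0 T) := by
  have hperiod {s t : ℝ} (h : γ s = γ t) : γ (t - s) = γ 0 := by
    simpa [← sub_eq_add_neg] using (htrans s t h (-s)).symm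
  obtain ⟨U, hU, hUinj⟩ := hloc
  obtain ⟨ε, hε, hεU⟩ := Metric.mem_nhds_iff.1 hU
  have hεle {T : ℝ} (hT : 0 < T) (h : γ T = γ 0) : ε ≤ T := by
    by_contra! hlt
    refine hT.ne' (hUinj (hεU ?_) (mem_of_mem_nhds hU) h)
    rwa [Metric.mem_ball, Real.dist_eq, sub_zero, abs_of_pos hT]
  obtain ⟨P, hP, hPγ⟩ : ∃ P > 0, γ P = γ 0 := by
    simp only [Function.Injective, not_forall] at hinj
    obtain ⟨s, t, hst, hne⟩ := hinj
    rcases lt_or_gt_of_ne hne with h | h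
    · exact ⟨t - s, sub_pos.2 h, hperiod hst⟩
    · exact ⟨s - t, sub_pos.2 h, hperiod hst.symm⟩
  have hcompact : IsCompact (Icc ε P ∩ {T | γ T = γ 0}) :=
    isCompact_Icc.inter_right (isClosed_eq hγ continuous_const)
  obtain ⟨T, ⟨⟨hεT, hTP⟩, hTγ⟩, hmin⟩ := hcompact.exists_isLeast ⟨P, ⟨hεle hP hPγ, le_rfl⟩, hPγ⟩
  have hle {S : ℝ} (hS : 0 < S) (h : γ S = γ 0) : T ≤ S := by
    by_contra! hlt
    exact hlt.not_ge (hmin ⟨⟨hεle hS h, hlt.le.trans hTP⟩, h⟩)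
  have hT : 0 < T := hε.trans_le hεT
  refine ⟨T, hT, fun u => ?_, ?_⟩
  · simpa [add_comm] using htrans T 0 hTγ u
  · intro a ha b hb hab
    by_contra hne
    rcases lt_or_gt_of_ne hne with h | h
    · linarith [hle (sub_pos.2 h) (hperiod hab), ha.1, hb.2]
    · linarith [hle (sub_pos.2 h) (hperiod hab.symm), hb.1, ha.2]

theorem piecewise_Iic_eventuallyEq {E : Type*} {α β : ℝ → E} {p : ℝ} (hαβ : α =ᶠ[𝓝 p] β) :
    (∀ t ≤ p, (Iic p).piecewise α β =ᶠ[𝓝 t] α) ∧ ∀ t ≥ p, (Iic p).piecewise α β =ᶠ[𝓝 t] β := by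
  refine ⟨fun t ht => ?_, fun t ht => ?_⟩
  · rcases ht.eq_or_lt with rfl | ht
    · filter_upwards [hαβ] with u hu
      by_cases h : u ∈ Iic t <;> simp [h, hu]
    · filter_upwards [Iio_mem_nhds ht] with u hu
      exact piecewise_eq_of_mem _ _ _ (mem_Iio.1 hu).le
  · rcases ht.eq_or_lt' with rfl | ht
    · filter_upwards [hαβ] with u hu
      by_cases h : u ∈ Iic t <;> simp [h, hu]
    · filter_upwards [Ioi_mem_nhds ht] with u hu
      exact piecewise_eq_of_notMem _ _ _ (notMem_Iic.2 hu)

end RealLine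

section Variation

variable {E : Type*} [PseudoEMetricSpace E]

theorem edist_variationOnFromTo {α : Type*} [LinearOrder α] {f : α → E} {S : Set α}
    (hf : LocallyBoundedVariationOn f S) {a s t : α} (ha : a ∈ S)
    (hs : s ∈ S) (ht : t ∈ S) :
    edist (variationOnFromTo f S a s) (variationOnFromTo f S a t) =
      eVariationOn f (S ∩ uIcc s t) := by
  wlog hst : s ≤ t generalizing s t
  · rw [edist_comm, uIcc_comm, this ht hs (le_of_not_ge hst)]
  rw [edist_comm, edist_dist, Real.dist_eq, variationOnFromTo.sub_right hf ha ht hs,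
    abs_of_nonneg (variationOnFromTo.nonneg_of_le f S hst), variationOnFromTo.eq_of_le f S hst,
    uIcc_of_le hst, ENNReal.ofReal_toReal (hf s t hs ht)]

theorem eVariationOn_uIcc_le_of_lipschitzWith {f : ℝ → E} {K : ℝ≥0} (hf : LipschitzWith K f)
    (s t : ℝ) : eVariationOn f (uIcc s t) ≤ K * edist s t := by
  wlog hst : s ≤ t generalizing s t
  · rw [edist_comm, uIcc_comm]
    exact this t s (le_of_not_ge hst)
  have hid : eVariationOn id (uIcc s t) = edist s t := by
    rw [uIcc_of_le hst, eVariationOn_id_Icc, edist_comm, edist_dist, Real.dist_eq,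
      abs_of_nonneg (sub_nonneg.2 hst)]
  rw [← hid]
  exact (hf.lipschitzOnWith (s := univ)).comp_eVariationOn_le (mapsTo_univ id _)

theorem hasUnitSpeedOn_of_ordConnected {f : ℝ → E} {s t : Set ℝ}
    (hf : HasUnitSpeedOn f s) (hts : t ⊆ s) (ht : t.OrdConnected) :
    HasUnitSpeedOn f t := by
  refine hasConstantSpeedOnWith_iff_ordered.2 fun x hx y hy _ => ?_
  rw [inter_eq_self_of_subset_right (ht.out hx hy), ← hf (hts hx) (hts hy),
    inter_eq_self_of_subset_right ((ht.out hx hy).trans hts)]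

end Variation

section ArcLength

variable {E : Type*} [EMetricSpace E]

/-- A bi-Lipschitz copy of the real line in `E`, parametrised by arc length. Unit speed makes the
parametrisation `1`-Lipschitz, so only the lower Lipschitz bound is recorded. -/
structure IsArclengthLine (c : ℝ → E) : Prop where
  hasUnitSpeedOn : HasUnitSpeedOn c univ
  exists_antilipschitzWith : ∃ K, AntilipschitzWith K c

namespace IsArclengthLine

variable {c d : ℝ → E}

theorem eVariationOn_Icc (hc : IsArclengthLine c) (x y : ℝ) :
    eVariationOn c (Icc x y) = ENNReal.ofReal (y - x) := by
  simpa using hc.hasUnitSpeedOn (mem_univ x) (mem_univ y)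

theorem lipschitzWith_one (hc : IsArclengthLine c) : LipschitzWith 1 c := by
  intro s t
  wlog hst : s ≤ t generalizing s t
  · rw [edist_comm, edist_comm s]
    exact this t s (le_of_not_ge hst)
  calc edist (c s) (c t) ≤ eVariationOn c (Icc s t) :=
        eVariationOn.edist_le c (left_mem_Icc.2 hst) (right_mem_Icc.2 hst)
    _ = 1 * edist s t := by
        rw [hc.eVariationOn_Icc, one_mul, edist_comm, edist_dist, Real.dist_eq,
          abs_of_nonneg (sub_nonneg.2 hst)]

theorem isEmbedding (hc : IsArclengthLine c) : IsEmbedding c :=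
  hc.exists_antilipschitzWith.elim fun _ hK => hK.isEmbedding hc.lipschitzWith_one.continuous

theorem comp_isometryEquiv (hc : IsArclengthLine c) (e : ℝ ≃ᵢ ℝ) : IsArclengthLine (c ∘ e) where
  hasUnitSpeedOn := by
    refine fun x _ y _ => ?_
    rw [univ_inter, NNReal.coe_one, one_mul]
    rcases real_isometry_eq_add_or_sub e.isometry with he | he
    · have hmono : MonotoneOn e (Icc x y) := fun u _ v _ huv => by
        rw [he u, he v]; gcongr
      have himage : e '' Icc x y = Icc (e 0 + x) (e 0 + y) := by
        rw [← image_const_add_Icc]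
        exact image_congr fun u _ => he u
      rw [eVariationOn.comp_eq_of_monotoneOn c e hmono, himage, hc.eVariationOn_Icc,
        add_sub_add_left_eq_sub]
    · have hanti : AntitoneOn e (Icc x y) := fun u _ v _ huv => by
        rw [he u, he v]; gcongr
      have himage : e '' Icc x y = Icc (e 0 - y) (e 0 - x) := by
        rw [← image_const_sub_Icc]
        exact image_congr fun u _ => he u
      rw [eVariationOn.comp_eq_of_antitoneOn c e hanti, himage, hc.eVariationOn_Icc,
        sub_sub_sub_cancel_left]
  exists_antilipschitzWith :=
    let ⟨K, hK⟩ := hc.exists_antilipschitzWith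
    ⟨1 * K, hK.comp e.isometry.antilipschitz⟩

theorem eq_add_of_monotoneOn (hc : IsArclengthLine c) (hd : IsArclengthLine d) {I : Set ℝ}
    (hI : I.OrdConnected) {φ : ℝ → ℝ} (hφ : ContinuousOn φ I) (hmono : MonotoneOn φ I)
    (hcd : EqOn c (d ∘ φ) I) {t u : ℝ} (ht : t ∈ I) (hu : u ∈ I) : φ u = φ t - t + u := by
  have hcφ : HasUnitSpeedOn (d ∘ φ) I := fun x hx y hy => by
    rw [← eVariationOn.congr (hcd.mono inter_subset_left)]
    exact hasUnitSpeedOn_of_ordConnected hc.hasUnitSpeedOn (subset_univ I) hI hx hy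
  have hdφ : HasUnitSpeedOn d (φ '' I) :=
    hasUnitSpeedOn_of_ordConnected hd.hasUnitSpeedOn (subset_univ _)
      (hI.isPreconnected.image φ hφ).ordConnected
  rw [unique_unit_speed hmono hcφ hdφ ht hu]
  ring

theorem exists_isometryEquiv (hc : IsArclengthLine c) (hd : IsArclengthLine d) {t : ℝ}
    (h : ∀ᶠ u in 𝓝 t, c u ∈ range d) : ∃ e : ℝ ≃ᵢ ℝ, c =ᶠ[𝓝 t] d ∘ e := by
  obtain ⟨l, r, ht, hI, hIrange⟩ := exists_Icc_mem_subset_of_mem_nhds h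
  set φ : ℝ → ℝ := Function.invFun d ∘ c
  have hcd : EqOn c (d ∘ φ) (Icc l r) := fun u hu => (Function.invFun_eq (hIrange hu)).symm
  have hφ : ContinuousOn φ (Icc l r) :=
    hd.isEmbedding.continuousOn_iff.2 (hc.isEmbedding.continuous.continuousOn.congr hcd.symm)
  have hφinj : InjOn φ (Icc l r) :=
    .of_comp (g := d) (hc.isEmbedding.injective.injOn.congr hcd)
  rcases hφ.strictMonoOn_of_injOn_Icc' (ht.1.trans ht.2) hφinj with hmono | hanti
  · refine ⟨IsometryEquiv.addLeft (φ t - t), ?_⟩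
    filter_upwards [hI] with u hu
    rw [hcd hu, Function.comp_apply,
      hc.eq_add_of_monotoneOn hd ordConnected_Icc hφ hmono.monotoneOn hcd ht hu]
    rfl
  · have hdneg := hd.comp_isometryEquiv (IsometryEquiv.neg ℝ)
    have hcdneg : EqOn c ((d ∘ IsometryEquiv.neg ℝ) ∘ fun u => -φ u) (Icc l r) := fun u hu => by
      simpa using hcd hu
    refine ⟨IsometryEquiv.subLeft (φ t + t), ?_⟩
    filter_upwards [hI] with u hu
    have : -φ u = -φ t - t + u :=
      hc.eq_add_of_monotoneOn hdneg ordConnected_Icc hφ.neg hanti.antitoneOn.neg hcdneg ht hu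
    rw [hcd hu, Function.comp_apply, Function.comp_apply, IsometryEquiv.subLeft_apply]
    congr 1
    linarith

end IsArclengthLine

theorem exists_isArclengthLine_range_eq {f : ℝ → E} {K K' : ℝ≥0} (hf : LipschitzWith K f)
    (hf' : AntilipschitzWith K' f) : ∃ c, IsArclengthLine c ∧ range c = range f := by
  have hbv : LocallyBoundedVariationOn f univ := hf.locallyBoundedVariationOn univ
  set v := variationOnFromTo f univ 0
  have hv (s t : ℝ) : edist (v s) (v t) = eVariationOn f (uIcc s t) := by
    rw [edist_variationOnFromTo hbv (mem_univ _) (mem_univ _) (mem_univ _), univ_inter]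
  have hvlip : LipschitzWith K v := fun s t =>
    (hv s t).trans_le (eVariationOn_uIcc_le_of_lipschitzWith hf s t)
  have hvanti : AntilipschitzWith K' v := fun s t => (hf' s t).trans <| by
    rw [hv]
    gcongr
    exact eVariationOn.edist_le f left_mem_uIcc right_mem_uIcc
  have hvsurj : Function.Surjective v :=
    surjective_of_antilipschitz_of_monotone hvlip.continuous hvanti
      (monotoneOn_univ.1 (variationOnFromTo.monotoneOn hbv (mem_univ 0)))
  have hnat (s : ℝ) : naturalParameterization f univ 0 (v s) = f s :=
    edist_eq_zero.1 (edist_naturalParameterization_eq_zero hbv (mem_univ 0) (mem_univ s))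
  refine ⟨naturalParameterization f univ 0, ⟨?_, K * K', ?_⟩, ?_⟩
  · have hspeed : HasUnitSpeedOn (naturalParameterization f univ 0) (v '' univ) :=
      has_unit_speed_naturalParameterization f hbv (mem_univ 0)
    rwa [image_univ, hvsurj.range_eq] at hspeed
  · refine hvsurj.forall₂.2 fun s t => ?_
    rw [hnat, hnat]
    calc edist (v s) (v t) ≤ K * edist s t := hvlip s t
      _ ≤ K * (K' * edist (f s) (f t)) := by gcongr; exact hf' s t
      _ = ↑(K * K') * edist (f s) (f t) := by rw [ENNReal.coe_mul, mul_assoc]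
  · rw [← hvsurj.range_comp]
    exact congrArg range (funext hnat)

end ArcLength

section LocalParam

variable {E : Type*} [EMetricSpace E] {F : Set E} {α β γ : ℝ → E} {s t : ℝ}

/-- Near the parameter `t`, the curve `γ` is an arclength line whose range is the germ of `F` at
`γ t`. Only germs are recorded, so that curves can be cut, glued and reparametrised without keeping
track of radii. -/
def IsArclengthParamAt (F : Set E) (γ : ℝ → E) (t : ℝ) : Prop :=
  ∃ c, IsArclengthLine c ∧ γ =ᶠ[𝓝 t] c ∧ F =ᶠ[𝓝 (γ t)] range c

namespace IsArclengthParamAt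

theorem congr (h : IsArclengthParamAt F α t) (hαβ : α =ᶠ[𝓝 t] β) : IsArclengthParamAt F β t :=
  let ⟨c, hc, hαc, hF⟩ := h
  ⟨c, hc, hαβ.symm.trans hαc, hαβ.eq_of_nhds ▸ hF⟩

theorem comp_isometryEquiv {e : ℝ ≃ᵢ ℝ} (h : IsArclengthParamAt F γ (e t)) :
    IsArclengthParamAt F (γ ∘ e) t :=
  let ⟨c, hc, hγc, hF⟩ := h
  ⟨c ∘ e, hc.comp_isometryEquiv e, hγc.comp_tendsto e.continuous.continuousAt, by
    rwa [e.surjective.range_comp]⟩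

theorem map_nhds_eq (h : IsArclengthParamAt F γ t) : map γ (𝓝 t) = 𝓝[F] (γ t) := by
  obtain ⟨c, hc, hγc, hF⟩ := h
  rw [map_congr hγc, hc.isEmbedding.map_nhds_eq, ← hγc.eq_of_nhds,
    nhdsWithin_eq_iff_eventuallyEq.2 hF]

theorem continuousAt (h : IsArclengthParamAt F γ t) : ContinuousAt γ t :=
  h.map_nhds_eq.trans_le nhdsWithin_le_nhds

theorem mem (h : IsArclengthParamAt F γ t) : γ t ∈ F :=
  let ⟨_, _, hγc, hF⟩ := h
  hF.mem_iff.self_of_nhds.2 ⟨t, hγc.eq_of_nhds.symm⟩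

theorem exists_injOn (h : IsArclengthParamAt F γ t) : ∃ U ∈ 𝓝 t, InjOn γ U :=
  let ⟨_, hc, hγc, _⟩ := h
  ⟨_, hγc, hc.isEmbedding.injective.injOn.congr fun _ hu => Eq.symm hu⟩

theorem eventually (h : IsArclengthParamAt F γ t) : ∀ᶠ u in 𝓝 t, IsArclengthParamAt F γ u := by
  obtain ⟨c, hc, hγc, hF⟩ := id h
  filter_upwards [hγc.eventuallyEq_nhds, h.continuousAt.eventually hF.eventuallyEq_nhds]
    with u hu hFu
  exact ⟨c, hc, hu, hFu⟩

theorem exists_isometryEquiv (hα : IsArclengthParamAt F α t) (hβ : IsArclengthParamAt F β s)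
    (hαβ : α t = β s) : ∃ e : ℝ ≃ᵢ ℝ, e t = s ∧ α =ᶠ[𝓝 t] β ∘ e := by
  obtain ⟨c, hc, hαc, hFc⟩ := id hα
  obtain ⟨d, hd, hβd, hFd⟩ := hβ
  have hcd : ∀ᶠ u in 𝓝 t, c u ∈ range d := by
    filter_upwards [hαc, hα.continuousAt.eventually (hFc.symm.trans (hαβ ▸ hFd)).mem_iff]
      with u hu hcd
    exact hu ▸ hcd.1 ⟨u, hu.symm⟩
  obtain ⟨e, he⟩ := hc.exists_isometryEquiv hd hcd
  have het : e t = s := hd.isEmbedding.injective <| by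
    rw [← hβd.eq_of_nhds, ← hαβ, hαc.eq_of_nhds, he.eq_of_nhds, Function.comp_apply]
  exact ⟨e, het, (hαc.trans he).trans
    (hβd.symm.comp_tendsto (het ▸ e.continuous.continuousAt : Tendsto e (𝓝 t) (𝓝 s)))⟩

theorem eventuallyEq_of_isPreconnected {S : Set ℝ} (hS : IsPreconnected S)
    (hα : ∀ t ∈ S, IsArclengthParamAt F α t) (hβ : ∀ t ∈ S, IsArclengthParamAt F β t)
    (hs : s ∈ S) (hαβ : α =ᶠ[𝓝 s] β) : ∀ t ∈ S, α =ᶠ[𝓝 t] β := by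
  refine hS.subset_of_closure_inter_subset (u := {t | α =ᶠ[𝓝 t] β})
    isOpen_setOfPred_eventually_nhds ⟨s, hs, hαβ⟩ ?_
  rintro t ⟨htO, htS⟩
  have hfreq : ∃ᶠ u in 𝓝 t, α =ᶠ[𝓝 u] β := mem_closure_iff_frequently.1 htO
  have hαβt : α t = β t := tendsto_nhds_unique_of_frequently_eq (hα t htS).continuousAt
    (hβ t htS).continuousAt (hfreq.mono fun _ => EventuallyEq.eq_of_nhds)
  -- At a limit of agreement points the two curves differ by an isometry with two fixed points.
  obtain ⟨e, het, he⟩ := (hα t htS).exists_isometryEquiv (hβ t htS) hαβt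
  obtain ⟨U, hU, hUinj⟩ := (hβ t htS).exists_injOn
  have hfix : ∀ᶠ u in 𝓝 t, α u = β u → e u = u := by
    filter_upwards [he, hU, e.continuous.continuousAt.preimage_mem_nhds (by rwa [het])]
      with u hu huU heU hαβu
    exact hUinj heU huU (hu.symm.trans hαβu)
  obtain ⟨u, hu, hfixu⟩ := (hfreq.and_eventually hfix.eventually_nhds).exists
  obtain ⟨v, hvu, hv⟩ : ∃ v ≠ u, e v = v := by
    have : ∀ᶠ v in 𝓝 u, e v = v := by
      filter_upwards [hu, hfixu] with v hv hfixv using hfixv hv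
    obtain ⟨v, hv, hvu⟩ := ((this.filter_mono nhdsWithin_le_nhds).and
      (self_mem_nhdsWithin (s := {u}ᶜ))).exists
    exact ⟨v, hvu, hv⟩
  have heid : ⇑e = id := funext <|
    real_isometry_eq_self_of_fixed e.isometry hvu hv (hfixu.self_of_nhds hu.eq_of_nhds)
  simpa [heid] using he

end IsArclengthParamAt

theorem exists_uniform_isArclengthParamAt (hF : IsCompact F)
    (h : ∀ x ∈ F, ∃ c, c 0 = x ∧ IsArclengthParamAt F c 0) :
    ∃ δ > 0, ∀ x ∈ F, ∃ c, c 0 = x ∧ ∀ u ∈ Ioo (-δ) δ, IsArclengthParamAt F c u := by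
  refine hF.induction_on (p := fun S => ∃ δ > 0, ∀ x ∈ S, ∃ c, c 0 = x ∧
    ∀ u ∈ Ioo (-δ) δ, IsArclengthParamAt F c u) ⟨1, one_pos, by simp⟩ ?_ ?_ ?_
  · rintro S T hST ⟨δ, hδ, H⟩
    exact ⟨δ, hδ, fun x hx => H x (hST hx)⟩
  · rintro S T ⟨δ, hδ, HS⟩ ⟨ε, hε, HT⟩
    refine ⟨min δ ε, lt_min hδ hε, ?_⟩
    rintro x (hx | hx)
    · obtain ⟨c, hc0, hc⟩ := HS x hx
      exact ⟨c, hc0, fun u hu => hc u ⟨by grind, by grind⟩⟩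
    · obtain ⟨c, hc0, hc⟩ := HT x hx
      exact ⟨c, hc0, fun u hu => hc u ⟨by grind, by grind⟩⟩
  · intro x hx
    obtain ⟨c, rfl, hc⟩ := h x hx
    obtain ⟨ε, hε, hcε⟩ := Metric.eventually_nhds_iff.1 hc.eventually
    have hcε' {u : ℝ} (hu : |u| < ε) : IsArclengthParamAt F c u := hcε (by simpa using hu)
    refine ⟨c '' Ioo (-(ε / 2)) (ε / 2), ?_, ε / 2, half_pos hε, ?_⟩
    · rw [← hc.map_nhds_eq]
      exact image_mem_map (Ioo_mem_nhds (by linarith) (by linarith))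
    · rintro _ ⟨v, hv, rfl⟩
      refine ⟨c ∘ IsometryEquiv.addLeft v, by simp, fun u hu => (hcε' ?_).comp_isometryEquiv⟩
      rw [IsometryEquiv.addLeft_apply, abs_lt]
      constructor <;> linarith [hu.1, hu.2, hv.1, hv.2]

section Extension

variable {δ : ℝ} (hδ : 0 < δ)
  (hF : ∀ x ∈ F, ∃ c, c 0 = x ∧ ∀ u ∈ Ioo (-δ) δ, IsArclengthParamAt F c u)
include hδ hF

theorem exists_extend_right_isArclengthParamAt {a b : ℝ} (hb : 0 < b)
    (ha : a < 0) (hγ : ∀ u ∈ Ioo a b, IsArclengthParamAt F γ u) :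
    ∃ γ', γ' =ᶠ[𝓝 0] γ ∧ ∀ u ∈ Ioo a (b + δ / 2), IsArclengthParamAt F γ' u := by
  obtain ⟨p, hp0, hpδ, hpb⟩ : ∃ p, 0 < p ∧ b - δ / 2 ≤ p ∧ p < b :=
    ⟨max (b / 2) (b - δ / 2), by grind, by grind, by grind⟩
  have hp := hγ p ⟨ha.trans hp0, hpb⟩
  obtain ⟨c, hc0, hc⟩ := hF (γ p) hp.mem
  obtain ⟨e, hep, he⟩ := hp.exists_isometryEquiv (hc 0 ⟨neg_lt_zero.2 hδ, hδ⟩) hc0.symm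
  obtain ⟨hleft, hright⟩ := piecewise_Iic_eventuallyEq he
  refine ⟨_, hleft 0 hp0.le, fun u hu => ?_⟩
  rcases le_or_gt u p with hup | hup
  · exact (hγ u ⟨hu.1, hup.trans_lt hpb⟩).congr (hleft u hup).symm
  · refine (IsArclengthParamAt.comp_isometryEquiv (hc (e u) ?_)).congr (hright u hup.le).symm
    have hdist : |e u| = |u - p| := by simpa [hep, Real.dist_eq] using e.dist_eq u p
    rw [mem_Ioo, ← abs_lt, hdist, abs_of_pos (sub_pos.2 hup)]
    linarith [hu.2]

theorem exists_extend_isArclengthParamAt {R : ℝ} (hR : 0 < R)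
    (hγ : ∀ u ∈ Ioo (-R) R, IsArclengthParamAt F γ u) :
    ∃ γ', γ' =ᶠ[𝓝 0] γ ∧ ∀ u ∈ Ioo (-(R + δ / 2)) (R + δ / 2), IsArclengthParamAt F γ' u := by
  have hreflect {a b : ℝ} {c : ℝ → E} (hc : ∀ u ∈ Ioo a b, IsArclengthParamAt F c u) :
      ∀ u ∈ Ioo (-b) (-a), IsArclengthParamAt F (c ∘ IsometryEquiv.neg ℝ) u := fun u hu =>
    (hc (-u) ⟨lt_neg.1 hu.2, neg_lt.1 hu.1⟩).comp_isometryEquiv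
  have hneg : Tendsto (IsometryEquiv.neg ℝ) (𝓝 0) (𝓝 0) :=
    (IsometryEquiv.neg ℝ).continuous.tendsto' 0 0 neg_zero
  obtain ⟨c₁, hc₁γ, hc₁⟩ := exists_extend_right_isArclengthParamAt hδ hF hR (neg_lt_zero.2 hR) hγ
  obtain ⟨c₂, hc₂c₁, hc₂⟩ := exists_extend_right_isArclengthParamAt hδ hF
    (neg_pos.2 (neg_lt_zero.2 hR)) (by linarith) (hreflect hc₁)
  refine ⟨c₂ ∘ IsometryEquiv.neg ℝ, ?_, by simpa using hreflect hc₂⟩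
  filter_upwards [hc₂c₁.comp_tendsto hneg, hc₁γ] with u hu hu'
  simpa [hu'] using hu

theorem exists_extend_Ioo_isArclengthParamAt (hγ : ∀ u ∈ Ioo (-δ) δ, IsArclengthParamAt F γ u)
    (R : ℝ) : ∃ γ', γ' =ᶠ[𝓝 0] γ ∧ ∀ u ∈ Ioo (-R) R, IsArclengthParamAt F γ' u := by
  have hextend (n : ℕ) : ∃ γ', γ' =ᶠ[𝓝 0] γ ∧
      ∀ u ∈ Ioo (-(δ + n * (δ / 2))) (δ + n * (δ / 2)), IsArclengthParamAt F γ' u := by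
    induction n with
    | zero => exact ⟨γ, .rfl, by simpa using hγ⟩
    | succ n ih =>
      obtain ⟨c, hcγ, hc⟩ := ih
      obtain ⟨c', hc'c, hc'⟩ := exists_extend_isArclengthParamAt hδ hF (by positivity) hc
      refine ⟨c', hc'c.trans hcγ, ?_⟩
      convert hc' using 4 <;> push_cast <;> ring
  obtain ⟨n, hn⟩ := exists_nat_gt (R / (δ / 2))
  rw [div_lt_iff₀ (half_pos hδ)] at hn
  obtain ⟨c, hcγ, hc⟩ := hextend n
  exact ⟨c, hcγ, fun u hu => hc u ⟨by linarith [hu.1], by linarith [hu.2]⟩⟩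

end Extension

theorem exists_forall_isArclengthParamAt (hF : IsCompact F)
    (h : ∀ x ∈ F, ∃ c, c 0 = x ∧ IsArclengthParamAt F c 0) {y : E} (hy : y ∈ F) :
    ∃ γ, γ 0 = y ∧ ∀ t, IsArclengthParamAt F γ t := by
  obtain ⟨δ, hδ, hFδ⟩ := exists_uniform_isArclengthParamAt hF h
  obtain ⟨c, rfl, hc⟩ := hFδ y hy
  choose Γ hΓ0 hΓ using exists_extend_Ioo_isArclengthParamAt hδ hFδ hc
  have hagree {R R' u : ℝ} (hR : |u| < R) (hR' : |u| < R') : Γ R u = Γ R' u := by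
    have hsub {r : ℝ} (hr : min R R' ≤ r) : ∀ v ∈ Ioo (-min R R') (min R R'),
        IsArclengthParamAt F (Γ r) v := fun v hv => hΓ r v ⟨by linarith [hv.1], hv.2.trans_le hr⟩
    have hpos : 0 < min R R' := (abs_nonneg u).trans_lt (lt_min hR hR')
    exact (IsArclengthParamAt.eventuallyEq_of_isPreconnected isPreconnected_Ioo
      (hsub (min_le_left R R')) (hsub (min_le_right R R')) ⟨neg_lt_zero.2 hpos, hpos⟩
      ((hΓ0 R).trans (hΓ0 R').symm) u (abs_lt.1 (lt_min hR hR'))).eq_of_nhds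
  refine ⟨fun t => Γ (|t| + 1) t, (hΓ0 _).eq_of_nhds, fun t => ?_⟩
  refine (hΓ (|t| + 1) t (abs_lt.1 (lt_add_one _))).congr ?_
  filter_upwards [continuous_abs.continuousAt.eventually_lt_const (lt_add_one |t|)] with u hu
  exact hagree hu (lt_add_one _)

section GlobalParam

variable (hγ : ∀ t, IsArclengthParamAt F γ t)
include hγ

theorem map_add_eq_of_forall_isArclengthParamAt (hst : γ s = γ t) (u : ℝ) :
    γ (s + u) = γ (t + u) := by
  obtain ⟨e, hes, he⟩ := (hγ s).exists_isometryEquiv (hγ t) hst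
  have hγe (v : ℝ) : γ v = γ (e v) :=
    (IsArclengthParamAt.eventuallyEq_of_isPreconnected isPreconnected_univ (fun v _ => hγ v)
      (fun v _ => (hγ (e v)).comp_isometryEquiv) (mem_univ s) he v (mem_univ v)).eq_of_nhds
  rcases real_isometry_eq_add_or_sub e.isometry with h | h
  · rw [hγe (s + u), h, ← hes, h s, add_assoc]
  · exfalso
    -- A reflection of the parameter line would fold `γ` at its centre `e 0 / 2`.
    obtain ⟨U, hU, hUinj⟩ := (hγ (e 0 / 2)).exists_injOn
    obtain ⟨ε, hε, hεU⟩ := Metric.mem_nhds_iff.1 hU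
    have hmem {v : ℝ} (hv : |v| < ε) : e 0 / 2 + v ∈ U := hεU (by simpa [Real.dist_eq] using hv)
    have hfold := hUinj (hmem (v := ε / 2) (by rw [abs_of_pos] <;> linarith))
      (hmem (v := -(ε / 2)) (by rw [abs_neg, abs_of_pos] <;> linarith)) (by rw [hγe, h]; ring_nf)
    linarith

theorem inter_closure_range_subset_of_forall_isArclengthParamAt
    (hF : ∀ x ∈ F, ∃ c, c 0 = x ∧ IsArclengthParamAt F c 0) :
    F ∩ closure (range γ) ⊆ range γ := by
  rintro x ⟨hxF, hx⟩
  obtain ⟨c, rfl, hc⟩ := hF x hxF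
  obtain ⟨l, r, h0, hcIoo⟩ := mem_nhds_iff_exists_Ioo_subset.1 hc.eventually
  have himage : c '' Ioo l r ∈ 𝓝[F] (c 0) :=
    hc.map_nhds_eq ▸ image_mem_map (isOpen_Ioo.mem_nhds h0)
  obtain ⟨_, ⟨s, rfl⟩, hs⟩ := ((mem_closure_iff_frequently.1 hx).and_eventually
    (mem_nhdsWithin_iff_eventually.1 himage)).exists
  obtain ⟨v, hv, hvs⟩ := hs (hγ s).mem
  obtain ⟨e, -, he⟩ := (hcIoo hv).exists_isometryEquiv (hγ s) hvs
  have hcγ : c 0 = γ (e 0) :=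
    (IsArclengthParamAt.eventuallyEq_of_isPreconnected isPreconnected_Ioo (fun u hu => hcIoo hu)
      (fun u _ => (hγ (e u)).comp_isometryEquiv) hv he 0 h0).eq_of_nhds
  exact ⟨e 0, hcγ.symm⟩

theorem not_injective_of_forall_isArclengthParamAt (hF : IsCompact F)
    (hclosed : F ∩ closure (range γ) ⊆ range γ) : ¬ Function.Injective γ := by
  intro hinj
  have hsub : range γ ⊆ F := range_subset_iff.2 fun t => (hγ t).mem
  have hind : IsInducing γ := isInducing_iff_nhds.2 fun t => by
    rw [← comap_map hinj (f := 𝓝 t), (hγ t).map_nhds_eq, nhdsWithin, comap_inf, comap_principal,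
      preimage_eq_univ_iff.2 hsub, principal_univ, inf_top_eq]
  have hrange : IsClosed (range γ) := closure_subset_iff_isClosed.1 fun x hx =>
    hclosed ⟨closure_minimal hsub hF.isClosed hx, hx⟩
  refine noncompact_univ ℝ (hind.isCompact_iff.2 ?_)
  rw [image_univ]
  exact hF.of_isClosed_subset hrange hsub

end GlobalParam

end LocalParam

section BilipschitzCurve

variable {E : Type*} [EMetricSpace E] {F : Set E}

/-- A one-dimensional bi-Lipschitz submanifold without boundary: near each of its points, `F` is
a bi-Lipschitz copy of the real line. -/
def IsLocallyBilipschitzLine (F : Set E) : Prop :=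
  ∀ x ∈ F, ∃ (f : ℝ → E) (K K' : ℝ≥0),
    LipschitzWith K f ∧ AntilipschitzWith K' f ∧ F =ᶠ[𝓝 x] range f

namespace IsLocallyBilipschitzLine

theorem exists_isArclengthParamAt (hF : IsLocallyBilipschitzLine F) {x : E} (hx : x ∈ F) :
    ∃ c, c 0 = x ∧ IsArclengthParamAt F c 0 := by
  obtain ⟨f, K, K', hf, hf', hFf⟩ := hF x hx
  obtain ⟨c, hc, hcf⟩ := exists_isArclengthLine_range_eq hf hf'
  rw [← hcf] at hFf
  obtain ⟨s, rfl⟩ := hFf.mem_iff.self_of_nhds.1 hx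
  have hcs : IsArclengthParamAt F c s := ⟨c, hc, .rfl, hFf⟩
  refine ⟨c ∘ IsometryEquiv.addLeft s, by simp, .comp_isometryEquiv (by simpa using hcs)⟩

theorem exists_jordan_parametrization (hF : IsLocallyBilipschitzLine F) (hFc : IsCompact F) {y : E}
    (hy : y ∈ F) : ∃ (a b : ℝ) (γ : ℝ → E), a < b ∧ ContinuousOn γ (Icc a b) ∧ γ a = γ b ∧
      InjOn γ (Ico a b) ∧ connectedComponentIn F y = γ '' Icc a b := by
  have hcharts := fun x (hx : x ∈ F) => hF.exists_isArclengthParamAt hx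
  obtain ⟨γ, rfl, hγ⟩ := exists_forall_isArclengthParamAt hFc hcharts hy
  have hcont : Continuous γ := continuous_iff_continuousAt.2 fun t => (hγ t).continuousAt
  have hclosed := inter_closure_range_subset_of_forall_isArclengthParamAt hγ hcharts
  have hcomponent : connectedComponentIn F (γ 0) = range γ :=
    connectedComponentIn_eq_of_mem_nhdsWithin (range_subset_iff.2 fun t => (hγ t).mem)
      (isPreconnected_range hcont)
      (forall_mem_range.2 fun t => (hγ t).map_nhds_eq ▸ range_mem_map) hclosed (mem_range_self 0)
  obtain ⟨T, hT, hperiod, hinj⟩ := exists_periodic_injOn_Ico hcont (hγ 0).exists_injOn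
    (fun _ _ => map_add_eq_of_forall_isArclengthParamAt hγ)
    (not_injective_of_forall_isArclengthParamAt hγ hFc hclosed)
  refine ⟨0, T, γ, hT, hcont.continuousOn, hperiod.eq.symm, hinj, ?_⟩
  rw [hcomponent, ← hperiod.image_Icc hT 0, zero_add]

end IsLocallyBilipschitzLine

end BilipschitzCurve

section CoordGraph

variable {V : Type*} [NormedAddCommGroup V] [InnerProductSpace ℝ V]
  {b : OrthonormalBasis (Fin 2) ℝ V} {φ : ℝ → ℝ} {K : ℝ≥0}

/-- The graph of `φ` in the coordinates of `V` given by the orthonormal basis `b`. -/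
def coordGraph (b : OrthonormalBasis (Fin 2) ℝ V) (φ : ℝ → ℝ) : Set V :=
  {q | ⟪b 1, q⟫ = φ ⟪b 0, q⟫}

theorem inner_smul_add_smul_basis (b : OrthonormalBasis (Fin 2) ℝ V) (s t : ℝ) :
    ⟪b 0, s • b 0 + t • b 1⟫ = s ∧ ⟪b 1, s • b 0 + t • b 1⟫ = t := by
  simp [inner_add_right, real_inner_smul_right, b.inner_eq_ite]

theorem coordGraph_eq_range (b : OrthonormalBasis (Fin 2) ℝ V) (φ : ℝ → ℝ) :
    coordGraph b φ = range fun s => s • b 0 + φ s • b 1 := by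
  ext q
  refine ⟨fun hq => ⟨⟪b 0, q⟫, ?_⟩, ?_⟩
  · have hq' : ⟪b 1, q⟫ = φ ⟪b 0, q⟫ := hq
    simpa [Fin.sum_univ_two, hq'] using b.sum_repr' q
  · rintro ⟨s, rfl⟩
    obtain ⟨h0, h1⟩ := inner_smul_add_smul_basis b s (φ s)
    exact h1.trans (congrArg φ h0.symm)

theorem exists_range_eq_coordGraph (hφ : LipschitzWith K φ) : ∃ (f : ℝ → V) (C C' : ℝ≥0),
    LipschitzWith C f ∧ AntilipschitzWith C' f ∧ range f = coordGraph b φ := by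
  refine ⟨fun s => s • b 0 + φ s • b 1, _, _,
    (ContinuousLinearMap.toSpanSingleton ℝ (b 0)).lipschitz.add
      ((ContinuousLinearMap.toSpanSingleton ℝ (b 1)).lipschitz.comp hφ),
    (innerSL ℝ (b 0)).lipschitz.to_rightInverse fun s => (inner_smul_add_smul_basis b s _).1,
    (coordGraph_eq_range b φ).symm⟩

theorem frontier_coordSubgraph (hφ : Continuous φ) :
    frontier {q | ⟪b 1, q⟫ ≤ φ ⟪b 0, q⟫} = coordGraph b φ := by
  set h : V → ℝ := fun q => ⟪b 1, q⟫ - φ ⟪b 0, q⟫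
  have hcont : Continuous h := by fun_prop
  have hopen : IsOpenMap h := IsOpenMap.of_sections fun x =>
    ⟨fun y => x + (y - h x) • b 1, by fun_prop, by simp, fun y => by
      simp only [h, inner_add_right, real_inner_smul_right, b.inner_eq_ite, if_true,
        Fin.zero_eq_one_iff, OfNat.ofNat_ne_one, if_false, mul_one, mul_zero, add_zero]
      ring⟩
  have hle : {q | ⟪b 1, q⟫ ≤ φ ⟪b 0, q⟫} = h ⁻¹' Iic 0 := by ext q; simp [h]
  have heq : coordGraph b φ = h ⁻¹' {0} := by ext q; simp [h, coordGraph, sub_eq_zero]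
  rw [hle, heq, ← hopen.preimage_frontier_eq_frontier_preimage hcont, frontier_Iic]

end CoordGraph

theorem exists_orthonormalBasis_apply_eq {ι : Type*} [Fintype ι]
    (g : EuclideanSpace ℝ ι ≃ᵢ EuclideanSpace ℝ ι) :
    ∃ b : OrthonormalBasis ι ℝ (EuclideanSpace ℝ ι), ∀ q i, g q i = ⟪b i, q⟫ + g 0 i := by
  classical
  set l := g.toRealAffineIsometryEquiv.linearIsometryEquiv
  refine ⟨(EuclideanSpace.basisFun ι ℝ).map l.symm, fun q i => ?_⟩
  have hg : g q = l q + g 0 := by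
    simpa using g.toRealAffineIsometryEquiv.map_vadd 0 q
  rw [hg, OrthonormalBasis.map_apply, l.symm.inner_map_eq_flip]
  exact congrArg (· + g 0 i) (EuclideanSpace.basisFun_inner ι ℝ (l q) i).symm

theorem isLipschitzGraph_of_subset_coordGraph
    {b : OrthonormalBasis (Fin 2) ℝ (EuclideanSpace ℝ (Fin 2))} {φ : ℝ → ℝ} {K : ℝ≥0}
    (hφ : LipschitzWith K φ) {Q : Set (EuclideanSpace ℝ (Fin 2))} (hQc : IsCompact Q)
    (hQ : IsPreconnected Q) (hQφ : Q ⊆ coordGraph b φ) : IsLipschitzGraph Q := by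
  have hself (s : ℝ) : ⟪b 0, s • b 0⟫ = s := by simp [real_inner_smul_right]
  refine ⟨K + 1, by positivity, b 1, b.norm_eq_one 1, (fun q => ⟪b 0, q⟫ • b 0) '' Q,
    fun q => φ ⟪b 0, q⟫, (hQc.image (by fun_prop)).isClosed, ?_, ?_, ?_, ?_⟩
  · have hproj : Convex ℝ ((fun q => ⟪b 0, q⟫) '' Q) :=
      (hQ.image _ (by fun_prop)).ordConnected.convex
    simpa only [image_image, LinearMap.toSpanSingleton_apply] using
      hproj.linear_image (LinearMap.toSpanSingleton ℝ _ (b 0))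
  · rintro _ ⟨q, -, rfl⟩
    simp [real_inner_smul_left, b.inner_eq_ite]
  · rintro _ ⟨q, -, rfl⟩ _ ⟨q', -, rfl⟩
    simp only [hself]
    rw [← sub_smul, norm_smul, b.norm_eq_one, mul_one, ← Real.dist_eq, ← dist_eq_norm]
    exact (hφ.dist_le_mul _ _).trans (by gcongr; simp)
  · rw [image_image]
    refine (image_id Q).symm.trans (image_congr fun q hq => ?_)
    have hq' : ⟪b 1, q⟫ = φ ⟪b 0, q⟫ := hQφ hq
    simpa [Fin.sum_univ_two, hself, hq'] using (b.sum_repr' q).symm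

namespace IsLipschitzDomain

variable {M : Set (EuclideanSpace ℝ (Fin 2))}

theorem exists_frontier_eventuallyEq_coordGraph (hM : IsLipschitzDomain M)
    {x : EuclideanSpace ℝ (Fin 2)} (hx : x ∈ frontier M) :
    ∃ (b : OrthonormalBasis (Fin 2) ℝ (EuclideanSpace ℝ (Fin 2))) (φ : ℝ → ℝ) (K : ℝ≥0),
      LipschitzWith K φ ∧ frontier M =ᶠ[𝓝 x] coordGraph b φ := by
  obtain ⟨g, r, ψ, L, hr, hL, hψ, hgM⟩ := hM.2 x hx
  obtain ⟨b, hb⟩ := exists_orthonormalBasis_apply_eq g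
  lift L to ℝ≥0 using hL
  have hφ : LipschitzWith L fun s => ψ (s + g 0 0) - g 0 1 := .of_dist_le_mul fun s t => by
    simpa [Real.dist_eq] using hψ (s + g 0 0) (t + g 0 0)
  refine ⟨b, _, _, hφ, ?_⟩
  rw [← frontier_coordSubgraph hφ.continuous]
  refine frontier_eventuallyEq (Eventually.set_eq ?_)
  filter_upwards [g.continuous.continuousAt.preimage_mem_nhds (Metric.ball_mem_nhds (g x) hr)]
    with q hq
  have hgq : g q ∈ g '' M ↔ g q 1 ≤ ψ (g q 0) :=
    (and_congr_left_iff.1 (Set.ext_iff.1 hgM (g q))) hq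
  rw [← g.injective.mem_set_image, hgq, hb q 0, hb q 1]
  exact le_sub_iff_add_le.symm

theorem isLocallyBilipschitzLine_frontier (hM : IsLipschitzDomain M) :
    IsLocallyBilipschitzLine (frontier M) := fun x hx => by
  obtain ⟨b, φ, K, hφ, hMφ⟩ := hM.exists_frontier_eventuallyEq_coordGraph hx
  obtain ⟨f, C, C', hf, hf', hfφ⟩ := exists_range_eq_coordGraph (b := b) hφ
  exact ⟨f, C, C', hf, hf', hfφ ▸ hMφ⟩

theorem exists_partition_isLipschitzGraph (hM : IsLipschitzDomain M) {a c : ℝ}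
    {γ : ℝ → EuclideanSpace ℝ (Fin 2)} (hac : a < c) (hγ : ContinuousOn γ (Icc a c))
    (hγM : MapsTo γ (Icc a c) (frontier M)) :
    ∃ (N : ℕ) (t : ℕ → ℝ), t 0 = a ∧ t N = c ∧ (∀ i < N, t i < t (i + 1)) ∧
      ∀ i < N, IsLipschitzGraph (γ '' Icc (t i) (t (i + 1))) := by
  have hlocal : ∀ x ∈ Icc a c, ∃ U ∈ 𝓝[Icc a c] x, U ⊆ Icc a c ∧
      ∃ (b : OrthonormalBasis (Fin 2) ℝ (EuclideanSpace ℝ (Fin 2))) (φ : ℝ → ℝ) (K : ℝ≥0),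
        LipschitzWith K φ ∧ MapsTo γ U (coordGraph b φ) := fun x hx => by
    obtain ⟨b, φ, K, hφ, hMφ⟩ := hM.exists_frontier_eventuallyEq_coordGraph (hγM hx)
    refine ⟨Icc a c ∩ {s | γ s ∈ coordGraph b φ}, inter_mem self_mem_nhdsWithin ?_,
      inter_subset_left, b, φ, K, hφ, fun s hs => hs.2⟩
    filter_upwards [(hγ x hx).eventually hMφ.mem_iff, self_mem_nhdsWithin] with s hs hsI
    exact hs.1 (hγM hsI)
  obtain ⟨N, t, h0, hN, ht, hgraph⟩ := exists_partition_Icc_of_local hac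
    (fun S T hST ⟨hT, b, φ, K, hφ, hTφ⟩ => ⟨hST.trans hT, b, φ, K, hφ, hTφ.mono_left hST⟩) hlocal
  refine ⟨N, t, h0, hN, ht, fun i hi => ?_⟩
  obtain ⟨hsub, b, φ, K, hφ, hmaps⟩ := hgraph i hi
  exact isLipschitzGraph_of_subset_coordGraph hφ (isCompact_Icc.image_of_continuousOn
    (hγ.mono hsub)) (isPreconnected_Icc.image _ (hγ.mono hsub)) hmaps.image_subset

end IsLipschitzDomain

theorem lipschitz_domain_boundary_structure_general {M : Set (EuclideanSpace ℝ (Fin 2))}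
    (hM : IsLipschitzDomain M) (hMc : IsCompact (frontier M)) :
    (∀ y ∈ frontier M, ∃ (a b : ℝ) (γ : ℝ → EuclideanSpace ℝ (Fin 2)),
      a < b ∧ ContinuousOn γ (Icc a b) ∧ γ a = γ b ∧ InjOn γ (Ico a b) ∧
      connectedComponentIn (frontier M) y = γ '' Icc a b) ∧
    (∀ (a b : ℝ) (γ : ℝ → EuclideanSpace ℝ (Fin 2)), a < b →
      ContinuousOn γ (Icc a b) → MapsTo γ (Icc a b) (frontier M) →
      ∃ (N : ℕ) (t : ℕ → ℝ), t 0 = a ∧ t N = b ∧ (∀ i < N, t i < t (i + 1)) ∧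
        ∀ i < N, IsLipschitzGraph (γ '' Icc (t i) (t (i + 1)))) :=
  ⟨fun _ hy => hM.isLocallyBilipschitzLine_frontier.exists_jordan_parametrization hMc hy,
    fun _ _ _ hab hγ hγM => hM.exists_partition_isLipschitzGraph hab hγ hγM⟩

/-- For a nonempty compact Lipschitz domain `M ⊆ ℝ²`: (a) every connected
component of `∂M` is a Jordan curve, and (b) every Jordan curve parametrizing a connected
component of `∂M` admits a partition whose pieces have Lipschitz-graph images. -/
theorem lipschitz_domain_boundary_structure
    (M : Set (EuclideanSpace ℝ (Fin 2))) (hMne : M.Nonempty) (hMc : IsCompact M)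
    (hM : IsLipschitzDomain M) :
    (∀ y ∈ frontier M, ∃ (a b : ℝ) (γ : ℝ → EuclideanSpace ℝ (Fin 2)),
      a < b ∧ ContinuousOn γ (Icc a b) ∧ γ a = γ b ∧ InjOn γ (Ico a b) ∧
      connectedComponentIn (frontier M) y = γ '' Icc a b) ∧
    (∀ (a b : ℝ) (γ : ℝ → EuclideanSpace ℝ (Fin 2)), a < b →
      ContinuousOn γ (Icc a b) → γ a = γ b → InjOn γ (Ico a b) →
      (∃ y ∈ frontier M, γ '' Icc a b = connectedComponentIn (frontier M) y) →
      ∃ (N : ℕ) (t : ℕ → ℝ), t 0 = a ∧ t N = b ∧ (∀ i < N, t i < t (i + 1)) ∧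
        ∀ i < N, IsLipschitzGraph (γ '' Icc (t i) (t (i + 1)))) := by
  have hF : IsCompact (frontier M) :=
    hMc.of_isClosed_subset isClosed_frontier hMc.isClosed.frontier_subset
  obtain ⟨hcomponents, hpartition⟩ := lipschitz_domain_boundary_structure_general hM hF
  refine ⟨hcomponents, fun a b γ hab hγ _ _ ⟨y, _, hγy⟩ => hpartition a b γ hab hγ ?_⟩
  exact mapsTo_iff_image_subset.2 (hγy.trans_subset (connectedComponentIn_subset _ y))
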